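/- Let 0<r<1, α>0 and β∈ℝ. Then for every integer n ≥ n₀(α,r,2) one has E_n(C^{α,r}_{β,2})_C = (e^{-α n^r}/√(2παr)) · n^{(1-r)/2} · (1 + γ_n · ( (1/(αr)) n^{-r} + √(αr) · n^{-(1-r)/2} )), where the quantity γ_n = γ_n(α,r,β) satisfies |γ_n| ≤ 392 π^{5/2}. -/

import Mathlib

open MeasureTheory Real Filter
open scoped ENNReal

/-- The generalized Poisson kernel `P_{α,r,β}(t) = Σ_{k=1}^∞ e^{-α k^r} cos(kt − βπ/2)`. -/
noncomputable def genPoissonKernel (α r β : ℝ) (t : ℝ) : ℝ :=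
  ∑' k : ℕ, Real.exp (-α * ((k : ℝ) + 1) ^ r) * Real.cos (((k : ℝ) + 1) * t - β * π / 2)

/-- Fourier cosine coefficient `a_k = (1/π)∫_{-π}^{π} f(t) cos(kt) dt`. -/
noncomputable def fourierCoefA (f : ℝ → ℝ) (k : ℕ) : ℝ :=
  (1 / π) * ∫ t in (-π)..π, f t * Real.cos (k * t)

/-- Fourier sine coefficient `b_k = (1/π)∫_{-π}^{π} f(t) sin(kt) dt`. -/
noncomputable def fourierCoefB (f : ℝ → ℝ) (k : ℕ) : ℝ :=
  (1 / π) * ∫ t in (-π)..π, f t * Real.sin (k * t)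

/-- Partial Fourier sum of order `m` of `f`. -/
noncomputable def fourierSum (m : ℕ) (f : ℝ → ℝ) (x : ℝ) : ℝ :=
  fourierCoefA f 0 / 2 +
    ∑ k ∈ Finset.Icc 1 m, (fourierCoefA f k * Real.cos (k * x) + fourierCoefB f k * Real.sin (k * x))

/-- The class `C^{α,r}_{β,p}` of generalized Poisson integrals. -/
def poissonClass (α r β : ℝ) (p : ℝ≥0∞) : Set (ℝ → ℝ) :=
  {f | (∀ x, f (x + 2 * π) = f x) ∧ ∃ a₀ : ℝ, ∃ φ : ℝ → ℝ,
    (∀ x, φ (x + 2 * π) = φ x) ∧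
    eLpNorm φ p (volume.restrict (Set.Ioc (0 : ℝ) (2 * π))) ≤ 1 ∧
    (∫ t in (0 : ℝ)..(2 * π), φ t) = 0 ∧
    ∀ x, f x = a₀ / 2 + (1 / π) * ∫ t in (-π)..π, genPoissonKernel α r β (x - t) * φ t}

/-- `E_n(C^{α,r}_{β,p})_C`: uniform deviation of Fourier sums of order `n-1` on the class. -/
noncomputable def EnC (α r β : ℝ) (p : ℝ≥0∞) (n : ℕ) : ℝ :=
  ⨆ f ∈ poissonClass α r β p, ⨆ x : ℝ, |f x - fourierSum (n - 1) f x|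

/-- `n₀(α,r,2)`: the smallest positive integer `n` with
`(1/(αr)) n^{-r} + 2αr n^{-(1-r)} ≤ (1/(3π)³)·(1/2)`. -/
noncomputable def n₀two (α r : ℝ) : ℕ :=
  sInf {n : ℕ | 0 < n ∧
    1 / (α * r) * (n : ℝ) ^ (-r) + 2 * α * r * (n : ℝ) ^ (-(1 - r)) ≤
      (1 / (3 * π) ^ 3) * (1 / 2)}

/-!
The deviation `f - S_{n-1} f` is the convolution of `φ` with the tail of the kernel. By
Cauchy–Schwarz and Parseval its sup norm is at most `√(∑_{k ≥ n} exp (-2αk^r) / π)`, and the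
normalized reflected tail attains this, so `E_n` is known exactly. The tail sum is compared with
`G n = exp (-2αn^r) n^{1-r} / (2αr)` by telescoping, since the derivative of `-G` at `x` is
`exp (-2αx^r) (1 + O(x^{-r}))`.

The definition of the class does not ask `φ` to be measurable, so a non-measurable `φ` has to be
shown to contribute nothing. The multipliers `exp (-αk^r)`, `0 < r ≤ 1`, are completely monotone, so
the Euler transform continues `∑ a_k z^k` analytically to `re z < 1`. Hence the kernel is real
analytic on `(0, 2π)` and vanishes only on a null set; a product of the kernel with a non-measurable
`φ` is therefore not integrable, and its integral is `0` by convention.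
-/

/-! ### Completely monotone sequences -/

/-- A sequence is `m`-times monotone if its alternating differences `a`, `a k - a (k + 1)`, ... up
to order `m` are all nonnegative; it is completely monotone if this holds for every `m`. The
recursion on the order makes all closure properties plain inductions. -/
def IsMultiplyMonotone : ℕ → (ℕ → ℝ) → Prop
  | 0, a => ∀ k, 0 ≤ a k
  | m + 1, a => (∀ k, 0 ≤ a k) ∧ IsMultiplyMonotone m fun k => a k - a (k + 1)

namespace IsMultiplyMonotone

variable {m : ℕ} {a b : ℕ → ℝ}

lemma nonneg (h : IsMultiplyMonotone m a) (k : ℕ) : 0 ≤ a k := by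
  cases m with
  | zero => exact h k
  | succ m => exact h.1 k

lemma of_succ (h : IsMultiplyMonotone (m + 1) a) : IsMultiplyMonotone m a := by
  induction m generalizing a with
  | zero => exact h.1
  | succ m ih => exact ⟨h.1, ih h.2⟩

lemma shift (h : IsMultiplyMonotone m a) : IsMultiplyMonotone m fun k => a (k + 1) := by
  induction m generalizing a with
  | zero => exact fun k => h (k + 1)
  | succ m ih => exact ⟨fun k => h.1 (k + 1), ih h.2⟩

lemma const {c : ℝ} (hc : 0 ≤ c) : IsMultiplyMonotone m fun _ => c := by
  induction m generalizing c with
  | zero => exact fun _ => hc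
  | succ m ih => exact ⟨fun _ => hc, by simpa using ih le_rfl⟩

lemma add (ha : IsMultiplyMonotone m a) (hb : IsMultiplyMonotone m b) :
    IsMultiplyMonotone m fun k => a k + b k := by
  induction m generalizing a b with
  | zero => exact fun k => add_nonneg (ha k) (hb k)
  | succ m ih =>
    refine ⟨fun k => add_nonneg (ha.1 k) (hb.1 k), ?_⟩
    convert ih ha.2 hb.2 using 2
    ring

lemma mul (ha : IsMultiplyMonotone m a) (hb : IsMultiplyMonotone m b) :
    IsMultiplyMonotone m fun k => a k * b k := by
  induction m generalizing a b with
  | zero => exact fun k => mul_nonneg (ha k) (hb k)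
  | succ m ih =>
    refine ⟨fun k => mul_nonneg (ha.1 k) (hb.1 k), ?_⟩
    convert (ih ha.2 hb.of_succ).add (ih ha.shift.of_succ hb.2) using 2
    ring

lemma pow (ha : IsMultiplyMonotone m a) (N : ℕ) : IsMultiplyMonotone m fun k => a k ^ N := by
  induction N with
  | zero => simpa using const zero_le_one
  | succ N ih => simpa only [pow_succ] using ih.mul ha

lemma inv (hb : ∀ k, 0 < b k) (h : IsMultiplyMonotone m fun k => b (k + 1) - b k) :
    IsMultiplyMonotone m fun k => (b k)⁻¹ := by
  induction m with
  | zero => exact fun k => (inv_pos.2 (hb k)).le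
  | succ m ih =>
    refine ⟨fun k => (inv_pos.2 (hb k)).le, ?_⟩
    have hinv := ih h.of_succ
    convert (hinv.mul hinv.shift).mul h.of_succ using 2 with k
    have := (hb k).ne'
    have := (hb (k + 1)).ne'
    field_simp

lemma of_tendsto {u : ℕ → ℕ → ℝ} (hu : ∀ N, IsMultiplyMonotone m (u N))
    (hlim : ∀ k, Tendsto (fun N => u N k) atTop (nhds (a k))) : IsMultiplyMonotone m a := by
  induction m generalizing u a with
  | zero => exact fun k => ge_of_tendsto' (hlim k) fun N => hu N k
  | succ m ih =>
    exact ⟨fun k => ge_of_tendsto' (hlim k) fun N => (hu N).1 k,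
      ih (fun N => (hu N).2) fun k => (hlim k).sub (hlim (k + 1))⟩

lemma integral {Ω : Type*} [MeasurableSpace Ω] {μ : Measure Ω} {g : Ω → ℕ → ℝ}
    (hg : ∀ᵐ t ∂μ, IsMultiplyMonotone m (g t)) (hint : ∀ k, Integrable (fun t => g t k) μ) :
    IsMultiplyMonotone m fun k => ∫ t, g t k ∂μ := by
  have hpos (k : ℕ) : 0 ≤ ∫ t, g t k ∂μ := integral_nonneg_of_ae (hg.mono fun t ht => ht.nonneg k)
  induction m generalizing g with
  | zero => exact hpos
  | succ m ih =>
    refine ⟨hpos, ?_⟩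
    simp_rw [← integral_sub (hint _) (hint _)]
    have hdiff : ∀ᵐ t ∂μ, IsMultiplyMonotone m fun k => g t k - g t (k + 1) :=
      hg.mono fun t ht => ht.2
    exact ih hdiff (fun k => (hint k).sub (hint (k + 1)))
      fun k => integral_nonneg_of_ae (hdiff.mono fun t ht => ht.nonneg k)

lemma exp_neg (hb : ∀ k, 0 ≤ b k) (h : IsMultiplyMonotone m fun k => b (k + 1) - b k) :
    IsMultiplyMonotone m fun k => exp (-b k) := by
  refine of_tendsto (u := fun N k => (1 + b k / N)⁻¹ ^ N) (fun N => (inv ?_ ?_).pow N) fun k => ?_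
  · intro k
    have := hb k
    positivity
  · convert h.mul (const (c := (N : ℝ)⁻¹) (by positivity)) using 2
    ring
  · have := (tendsto_one_add_div_pow_exp (b k)).inv₀ (exp_ne_zero _)
    simpa only [inv_pow, Real.exp_neg] using this

lemma inv_add_natCast {x : ℝ} (hx : 0 < x) : IsMultiplyMonotone m fun k : ℕ => (x + k)⁻¹ := by
  refine inv (fun k => by positivity) ?_
  convert const (m := m) zero_le_one using 2
  push_cast
  ring

-- `x ^ r` is a Bernstein function: a positive mixture of `1 / t - 1 / (t + x)` over `t > 0`.
lemma rpow_sub_rpow {x r : ℝ} (hx : 0 ≤ x) (hr0 : 0 < r) (hr1 : r < 1) :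
    IsMultiplyMonotone m fun k : ℕ => (x + (k + 1 : ℕ)) ^ r - (x + k) ^ r := by
  have hr : r ∈ Set.Ioo (0 : ℝ) 1 := ⟨hr0, hr1⟩
  have hint (k : ℕ) : IntegrableOn (fun t => rpowIntegrand₀₁ r t (x + k)) (Set.Ioi 0) :=
    integrableOn_rpowIntegrand₀₁_Ioi hr (by positivity)
  have hmix : IsMultiplyMonotone m fun k : ℕ =>
      ∫ t in Set.Ioi 0, (rpowIntegrand₀₁ r t (x + (k + 1 : ℕ)) - rpowIntegrand₀₁ r t (x + k)) := by
    refine integral ?_ fun k => (hint (k + 1)).sub (hint k)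
    refine (ae_restrict_iff' measurableSet_Ioi).2 (ae_of_all _ fun t (ht : 0 < t) => ?_)
    convert (const (rpow_nonneg ht.le r)).mul
      (inv_add_natCast (m := m + 1) (add_pos_of_pos_of_nonneg ht hx)).2 using 2
    simp only [rpowIntegrand₀₁]
    ring
  have hconst : 0 ≤ (∫ t in Set.Ioi 0, rpowIntegrand₀₁ r t 1)⁻¹ :=
    inv_nonneg.2 <| setIntegral_nonneg measurableSet_Ioi fun t ht =>
      rpowIntegrand₀₁_nonneg hr0 (le_of_lt ht) zero_le_one
  convert (const hconst).mul hmix using 2 with k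
  rw [integral_sub (hint (k + 1)) (hint k), mul_sub,
    ← rpow_eq_const_mul_integral hr (by positivity),
    ← rpow_eq_const_mul_integral hr (by positivity)]

lemma exp_neg_mul_rpow {α r x : ℝ} (hα : 0 ≤ α) (hr0 : 0 < r) (hr1 : r ≤ 1) (hx : 0 ≤ x) :
    IsMultiplyMonotone m fun k : ℕ => exp (-(α * (x + k) ^ r)) := by
  refine exp_neg (fun k => by positivity) ?_
  have hdiff : IsMultiplyMonotone m fun k : ℕ => (x + (k + 1 : ℕ)) ^ r - (x + k) ^ r := by
    rcases hr1.lt_or_eq with hr1 | rfl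
    · exact rpow_sub_rpow hx hr0 hr1
    · simpa using const zero_le_one
  simpa only [mul_sub] using (const hα).mul hdiff

end IsMultiplyMonotone

/-! ### The Euler transform -/

/-- The Euler difference `k ↦ a (k + 1) - a k / 2`. On the moments of a measure on `[0, 1]` it acts
as multiplication by `x - 1 / 2`, so each application halves a completely monotone sequence. -/
noncomputable def eulerDiff : Module.End ℝ (ℕ → ℝ) :=
  LinearMap.funLeft ℝ ℝ Nat.succ - (2⁻¹ : ℝ) • 1

lemma eulerDiff_apply (a : ℕ → ℝ) (k : ℕ) : eulerDiff a k = a (k + 1) - a k / 2 := by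
  simp [eulerDiff, div_eq_inv_mul]

lemma abs_eulerDiff_pow_le {m : ℕ} {a : ℕ → ℝ} (h : IsMultiplyMonotone m a) (k : ℕ) :
    |(eulerDiff ^ m) a k| ≤ (1 / 2) ^ m * a k := by
  induction m generalizing a with
  | zero => simp [abs_of_nonneg (h k)]
  | succ m ih =>
    have hsplit : eulerDiff a = (2⁻¹ : ℝ) • ((fun j => a (j + 1)) - fun j => a j - a (j + 1)) := by
      ext j
      simp only [eulerDiff_apply, Pi.smul_apply, Pi.sub_apply, smul_eq_mul]
      ring
    rw [pow_succ, Module.End.mul_apply, hsplit, map_smul, map_sub, Pi.smul_apply, Pi.sub_apply,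
      smul_eq_mul, abs_mul, abs_of_pos (by norm_num)]
    calc 2⁻¹ * |_ - _|
      _ ≤ 2⁻¹ * ((1 / 2) ^ m * a (k + 1) + (1 / 2) ^ m * (a k - a (k + 1))) := by
          gcongr
          exact (abs_sub _ _).trans (add_le_add (ih h.of_succ.shift) (ih h.2))
      _ = (1 / 2) ^ (m + 1) * a k := by ring

lemma summable_ofReal_mul_pow {b : ℕ → ℝ} (hb : Summable b) {z : ℂ} (hz : ‖z‖ ≤ 1) :
    Summable fun k => (b k : ℂ) * z ^ k := by
  refine Summable.of_norm_bounded hb.abs fun k => ?_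
  rw [norm_mul, norm_pow, Complex.norm_real, norm_eq_abs]
  exact mul_le_of_le_one_right (abs_nonneg _) (pow_le_one₀ (norm_nonneg _) hz)

lemma one_sub_half_ne_zero {z : ℂ} (hz : z.re < 1) : 1 - z / 2 ≠ 0 := by
  intro h
  have : z = 2 := by linear_combination -2 * h
  norm_num [this] at hz

lemma norm_div_one_sub_half_lt_two {z : ℂ} (hz : z.re < 1) : ‖z / (1 - z / 2)‖ < 2 := by
  have hsq : ‖z‖ ^ 2 < ‖2 * (1 - z / 2)‖ ^ 2 := by
    rw [← Complex.normSq_eq_norm_sq, ← Complex.normSq_eq_norm_sq, Complex.normSq_apply,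
      Complex.normSq_apply]
    simp only [Complex.mul_re, Complex.mul_im, Complex.sub_re, Complex.sub_im, Complex.re_ofNat,
      Complex.im_ofNat, Complex.one_re, Complex.one_im, Complex.div_ofNat_re, Complex.div_ofNat_im]
    nlinarith
  rw [norm_div, div_lt_iff₀ (norm_pos_iff.2 (one_sub_half_ne_zero hz))]
  simpa using lt_of_pow_lt_pow_left₀ 2 (norm_nonneg _) hsq

lemma tsum_mul_pow_eq_eulerDiff {b : ℕ → ℝ} (hb : Summable b) {z : ℂ} (hz : ‖z‖ ≤ 1)
    (hz1 : 1 - z / 2 ≠ 0) :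
    ∑' k, (b k : ℂ) * z ^ k =
      b 0 / (1 - z / 2) + z / (1 - z / 2) * ∑' k, (eulerDiff b k : ℂ) * z ^ k := by
  have hs := summable_ofReal_mul_pow hb hz
  have hs1 := summable_ofReal_mul_pow ((summable_nat_add_iff 1).2 hb) hz
  have hdiff : ∑' k, (eulerDiff b k : ℂ) * z ^ k =
      ∑' k, (b (k + 1) : ℂ) * z ^ k - (∑' k, (b k : ℂ) * z ^ k) / 2 := by
    rw [← tsum_div_const, ← hs1.tsum_sub (hs.div_const 2)]
    refine tsum_congr fun k => ?_
    rw [eulerDiff_apply]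
    push_cast
    ring
  have hhead : ∑' k, (b k : ℂ) * z ^ k = b 0 + z * ∑' k, (b (k + 1) : ℂ) * z ^ k := by
    rw [hs.tsum_eq_zero_add, ← tsum_mul_left]
    congr 1
    · simp
    · exact tsum_congr fun k => by ring
  rw [hdiff, div_mul_eq_mul_div, ← add_div, eq_div_iff hz1]
  linear_combination hhead

section EulerContinuation

variable {a : ℕ → ℝ} {z : ℂ}

lemma summable_eulerDiff_pow {m : ℕ} (ha : Summable a) (hm : IsMultiplyMonotone m a) :
    Summable ((eulerDiff ^ m) a) :=
  Summable.of_norm_bounded (ha.mul_left _) (abs_eulerDiff_pow_le hm)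

lemma tsum_mul_pow_eq_sum_eulerDiff_add (ha : Summable a) (hm : ∀ m, IsMultiplyMonotone m a)
    (hz : ‖z‖ ≤ 1) (hz1 : 1 - z / 2 ≠ 0) (M : ℕ) :
    ∑' k, (a k : ℂ) * z ^ k =
      ∑ m ∈ Finset.range M, ((eulerDiff ^ m) a 0 : ℂ) * (z / (1 - z / 2)) ^ m / (1 - z / 2) +
        (z / (1 - z / 2)) ^ M * ∑' k, ((eulerDiff ^ M) a k : ℂ) * z ^ k := by
  induction M with
  | zero => simp
  | succ M ih =>
    rw [Finset.sum_range_succ, ih,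
      tsum_mul_pow_eq_eulerDiff (summable_eulerDiff_pow ha (hm M)) hz hz1, pow_succ' eulerDiff,
      Module.End.mul_apply]
    ring

/-- The Euler transform of the power series `∑ a k * z ^ k`. For completely monotone `a` it
converges on the half-plane `re z < 1` and continues the power series from the unit disc to it. -/
noncomputable def eulerContinuation (a : ℕ → ℝ) (z : ℂ) : ℂ :=
  (∑' m, ((eulerDiff ^ m) a 0 : ℂ) * (z / (1 - z / 2)) ^ m) / (1 - z / 2)

lemma norm_eulerDiff_pow_mul_pow_le (hm : ∀ m, IsMultiplyMonotone m a) {w : ℂ} {ρ : ℝ}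
    (hw : ‖w‖ ≤ ρ) (m : ℕ) : ‖((eulerDiff ^ m) a 0 : ℂ) * w ^ m‖ ≤ a 0 * (ρ / 2) ^ m := by
  rw [norm_mul, norm_pow, Complex.norm_real, norm_eq_abs]
  calc |(eulerDiff ^ m) a 0| * ‖w‖ ^ m
    _ ≤ (1 / 2) ^ m * a 0 * ρ ^ m := by
        gcongr
        · exact mul_nonneg (by positivity) ((hm 0).nonneg 0)
        · exact abs_eulerDiff_pow_le (hm m) 0
    _ = a 0 * (ρ / 2) ^ m := by rw [div_pow, div_pow]; ring

lemma summable_const_mul_half_pow (c : ℝ) {ρ : ℝ} (hρ0 : 0 ≤ ρ) (hρ2 : ρ < 2) :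
    Summable fun m : ℕ => c * (ρ / 2) ^ m :=
  (summable_geometric_of_lt_one (by positivity) (by linarith)).mul_left c

lemma tendsto_eulerDiff_remainder (ha : Summable a) (hm : ∀ m, IsMultiplyMonotone m a)
    (hz : ‖z‖ ≤ 1) {w : ℂ} (hw : ‖w‖ < 2) :
    Tendsto (fun M => w ^ M * ∑' k, ((eulerDiff ^ M) a k : ℂ) * z ^ k) atTop (nhds 0) := by
  refine squeeze_zero_norm (a := fun M => (‖w‖ / 2) ^ M * ∑' k, a k) (fun M => ?_) ?_
  · have hsum : ‖∑' k, ((eulerDiff ^ M) a k : ℂ) * z ^ k‖ ≤ (1 / 2) ^ M * ∑' k, a k := by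
      refine tsum_of_norm_bounded (ha.hasSum.mul_left _) fun k => ?_
      rw [norm_mul, norm_pow, Complex.norm_real, norm_eq_abs]
      exact (mul_le_of_le_one_right (abs_nonneg _) (pow_le_one₀ (norm_nonneg _) hz)).trans
        (abs_eulerDiff_pow_le (hm M) k)
    rw [norm_mul, norm_pow]
    calc ‖w‖ ^ M * ‖∑' k, ((eulerDiff ^ M) a k : ℂ) * z ^ k‖
      _ ≤ ‖w‖ ^ M * ((1 / 2) ^ M * ∑' k, a k) := by gcongr
      _ = (‖w‖ / 2) ^ M * ∑' k, a k := by rw [div_pow, div_pow]; ring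
  · simpa using (tendsto_pow_atTop_nhds_zero_of_lt_one (by positivity)
      (show ‖w‖ / 2 < 1 by linarith)).mul_const (∑' k, a k)

lemma tsum_mul_pow_eq_eulerContinuation (ha : Summable a) (hm : ∀ m, IsMultiplyMonotone m a)
    (hz : ‖z‖ ≤ 1) (hz1 : z.re < 1) : ∑' k, (a k : ℂ) * z ^ k = eulerContinuation a z := by
  have hw := norm_div_one_sub_half_lt_two hz1
  have hsum : Summable fun m => ((eulerDiff ^ m) a 0 : ℂ) * (z / (1 - z / 2)) ^ m :=
    Summable.of_norm_bounded (summable_const_mul_half_pow _ (norm_nonneg _) hw)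
      (norm_eulerDiff_pow_mul_pow_le hm le_rfl)
  have hlim := (hsum.div_const (1 - z / 2)).hasSum.tendsto_sum_nat.add
    (tendsto_eulerDiff_remainder ha hm hz hw)
  simp_rw [← tsum_mul_pow_eq_sum_eulerDiff_add ha hm hz (one_sub_half_ne_zero hz1)] at hlim
  rw [tendsto_nhds_unique tendsto_const_nhds hlim, tsum_div_const, add_zero, eulerContinuation]

lemma analyticAt_tsum_eulerDiff_mul_pow (hm : ∀ m, IsMultiplyMonotone m a) {w : ℂ}
    (hw : ‖w‖ < 2) :
    AnalyticAt ℂ (fun w : ℂ => ∑' m, ((eulerDiff ^ m) a 0 : ℂ) * w ^ m) w := by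
  obtain ⟨ρ, hwρ, hρ2⟩ := exists_between hw
  have hdiff : DifferentiableOn ℂ (fun w : ℂ => ∑' m, ((eulerDiff ^ m) a 0 : ℂ) * w ^ m)
      (Metric.ball 0 ρ) :=
    Complex.differentiableOn_tsum_of_summable_norm
      (summable_const_mul_half_pow (a 0) ((norm_nonneg _).trans hwρ.le) hρ2)
      (fun _ => by fun_prop) Metric.isOpen_ball
      fun m w hw => norm_eulerDiff_pow_mul_pow_le hm (mem_ball_zero_iff.1 hw).le m
  exact hdiff.analyticAt (Metric.isOpen_ball.mem_nhds (mem_ball_zero_iff.2 hwρ))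

lemma analyticAt_eulerContinuation (hm : ∀ m, IsMultiplyMonotone m a) (hz : z.re < 1) :
    AnalyticAt ℂ (eulerContinuation a) z := by
  have hden : AnalyticAt ℂ (fun s : ℂ => 1 - s / 2) z := by fun_prop
  have hne := one_sub_half_ne_zero hz
  exact (AnalyticAt.fun_comp (f := fun s : ℂ => s / (1 - s / 2))
    (analyticAt_tsum_eulerDiff_mul_pow hm (norm_div_one_sub_half_lt_two hz))
    (analyticAt_id.fun_div hden hne)).fun_div hden hne

end EulerContinuation

/-! ### Cosine kernels -/

lemma integral_cos_int_mul_sub {c : ℤ} (hc : c ≠ 0) (u : ℝ) :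
    ∫ t in (-π)..π, cos (c * t - u) = 0 := by
  have hshift : (c : ℝ) * π - u = c * -π - u + c * (2 * π) := by ring
  rw [intervalIntegral.integral_comp_mul_sub (fun x => cos x) (Int.cast_ne_zero.2 hc), integral_cos,
    hshift, sin_add_int_mul_two_pi, sub_self, smul_zero]

lemma integral_cos_succ_mul_sub (k : ℕ) (u : ℝ) :
    ∫ t in (-π)..π, cos (((k : ℝ) + 1) * t - u) = 0 := by
  exact_mod_cast integral_cos_int_mul_sub (c := (k + 1 : ℕ)) (by positivity) u

lemma integral_cos_mul_cos (k j : ℕ) (u v : ℝ) :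
    ∫ t in (-π)..π, cos (((k : ℝ) + 1) * t - u) * cos (((j : ℝ) + 1) * t - v) =
      if k = j then π * cos (u - v) else 0 := by
  have hprod (t : ℝ) : cos (((k : ℝ) + 1) * t - u) * cos (((j : ℝ) + 1) * t - v) =
      (cos (((k - j : ℤ) : ℝ) * t - (u - v)) + cos (((k + j + 2 : ℤ) : ℝ) * t - (u + v))) / 2 := by
    rw [eq_div_iff two_ne_zero, mul_comm _ (2 : ℝ), ← mul_assoc, two_mul_cos_mul_cos]
    push_cast
    ring_nf
  simp_rw [hprod]
  rw [intervalIntegral.integral_div,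
    intervalIntegral.integral_add (Continuous.intervalIntegrable (by fun_prop) _ _)
      (Continuous.intervalIntegrable (by fun_prop) _ _),
    integral_cos_int_mul_sub (c := k + j + 2) (by positivity), add_zero]
  split_ifs with hkj
  · subst hkj
    simp only [sub_self, Int.cast_zero, zero_mul, zero_sub, cos_neg,
      intervalIntegral.integral_const, smul_eq_mul]
    ring
  · rw [integral_cos_int_mul_sub (by omega), zero_div]

/-- The kernel `∑ a k * cos ((k + 1) * t - θ)` with amplitudes `a` and common phase `θ`; the index
is shifted so that there is no constant term. -/
noncomputable def cosKernel (a : ℕ → ℝ) (θ t : ℝ) : ℝ :=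
  ∑' k : ℕ, a k * cos (((k : ℝ) + 1) * t - θ)

section CosKernel

variable {a : ℕ → ℝ}

lemma norm_mul_cos_le (c y : ℝ) : ‖c * cos y‖ ≤ |c| := by
  rw [norm_mul, norm_eq_abs, norm_eq_abs]
  exact mul_le_of_le_one_right (abs_nonneg _) (abs_cos_le_one _)

lemma hasSum_cosKernel (ha : Summable a) (θ t : ℝ) :
    HasSum (fun k : ℕ => a k * cos (((k : ℝ) + 1) * t - θ)) (cosKernel a θ t) :=
  (Summable.of_norm_bounded ha.abs fun _ => norm_mul_cos_le _ _).hasSum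

lemma continuous_cosKernel (ha : Summable a) (θ : ℝ) : Continuous (cosKernel a θ) :=
  continuous_tsum (fun _ => by fun_prop) ha.abs fun _ _ => norm_mul_cos_le _ _

lemma periodic_cosKernel (a : ℕ → ℝ) (θ : ℝ) : Function.Periodic (cosKernel a θ) (2 * π) := by
  intro t
  refine tsum_congr fun k => ?_
  rw [← cos_add_nat_mul_two_pi (((k : ℝ) + 1) * t - θ) (k + 1)]
  push_cast
  ring_nf

lemma hasSum_integral_cosKernel_comp_mul (ha : Summable a) (θ : ℝ) {g φ : ℝ → ℝ}
    (hg : Continuous g) {u v : ℝ} (hφ : IntervalIntegrable φ volume u v) :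
    HasSum (fun k : ℕ => a k * ∫ t in u..v, cos (((k : ℝ) + 1) * g t - θ) * φ t)
      (∫ t in u..v, cosKernel a θ (g t) * φ t) := by
  have h := intervalIntegral.hasSum_integral_of_dominated_convergence (μ := volume)
    (F := fun (k : ℕ) t => a k * cos (((k : ℝ) + 1) * g t - θ) * φ t)
    (f := fun t => cosKernel a θ (g t) * φ t) (fun k t => |a k| * ‖φ t‖)
    (fun k => (Continuous.aestronglyMeasurable (by fun_prop)).mul
      hφ.aestronglyMeasurable_restrict_uIoc)
    (fun k => ae_of_all _ fun t _ => by
      rw [norm_mul]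
      exact mul_le_mul_of_nonneg_right (norm_mul_cos_le _ _) (norm_nonneg _))
    (ae_of_all _ fun t _ => ha.abs.mul_right _)
    (by simp_rw [tsum_mul_right]; exact hφ.norm.const_mul _)
    (ae_of_all _ fun t _ => (hasSum_cosKernel ha θ (g t)).mul_right _)
  simpa only [mul_assoc, intervalIntegral.integral_const_mul] using h

lemma integral_cosKernel_mul_cos (ha : Summable a) (θ v : ℝ) (j : ℕ) :
    ∫ t in (-π)..π, cosKernel a θ t * cos (((j : ℝ) + 1) * t - v) = π * (a j * cos (θ - v)) := by
  have h := hasSum_integral_cosKernel_comp_mul ha θ continuous_id (u := -π) (v := π)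
    (φ := fun t => cos (((j : ℝ) + 1) * t - v)) (Continuous.intervalIntegrable (by fun_prop) _ _)
  simp only [id_eq, integral_cos_mul_cos] at h
  rw [← h.tsum_eq, tsum_eq_single j fun k hk => by rw [if_neg hk, mul_zero], if_pos rfl]
  ring

lemma integral_cosKernel (ha : Summable a) (θ : ℝ) : ∫ t in (-π)..π, cosKernel a θ t = 0 := by
  have h := hasSum_integral_cosKernel_comp_mul ha θ continuous_id
    (intervalIntegrable_const (μ := volume) (a := -π) (b := π) (c := (1 : ℝ)))
  simp only [id_eq, mul_one, integral_cos_succ_mul_sub, mul_zero] at h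
  exact h.unique hasSum_zero

lemma integral_sq_cosKernel (ha : Summable a) (θ : ℝ) :
    ∫ t in (-π)..π, cosKernel a θ t ^ 2 = π * ∑' k, a k ^ 2 := by
  have h := hasSum_integral_cosKernel_comp_mul ha θ continuous_id
    ((continuous_cosKernel ha θ).intervalIntegrable (-π) π)
  simp only [id_eq, mul_comm (cos _) (cosKernel a θ _), integral_cosKernel_mul_cos ha, sub_self,
    cos_zero, mul_one] at h
  simp_rw [sq, ← h.tsum_eq, ← tsum_mul_left]
  exact tsum_congr fun k => by ring

end CosKernel

lemma integral_comp_const_sub_of_periodic {g : ℝ → ℝ} (hg : Function.Periodic g (2 * π)) (x : ℝ) :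
    ∫ t in (-π)..π, g (x - t) = ∫ t in (-π)..π, g t := by
  rw [intervalIntegral.integral_comp_sub_left]
  convert hg.intervalIntegral_add_eq (x - π) (-π) using 2 <;> ring

/-! ### Analyticity and zeros of completely monotone kernels -/

lemma ae_of_periodic_of_ae_Ioc {P : ℝ → Prop} {T : ℝ} (hT : 0 < T) (hP : Function.Periodic P T)
    (h : ∀ᵐ t ∂volume.restrict (Set.Ioc 0 T), P t) : ∀ᵐ t, P t := by
  rw [ae_restrict_iff' measurableSet_Ioc] at h
  have htranslates : ∀ᵐ t, ∀ j : ℤ, t + j • T ∈ Set.Ioc 0 T → P (t + j • T) :=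
    ae_all_iff.2 fun j => (measurePreserving_add_right volume (j • T)).quasiMeasurePreserving.ae h
  filter_upwards [htranslates] with t ht
  obtain ⟨j, hj, -⟩ := existsUnique_add_zsmul_mem_Ioc hT t 0
  rw [zero_add] at hj
  exact (hP.zsmul j t).mp (ht j hj)

lemma cos_lt_one_of_mem_Ioo {t : ℝ} (ht : t ∈ Set.Ioo 0 (2 * π)) : cos t < 1 := by
  refine (cos_le_one t).lt_of_ne fun h => ?_
  have hlt : -(2 * π) < t := by linarith [ht.1, pi_pos]
  exact ht.1.ne' ((cos_eq_one_iff_of_lt_of_lt hlt ht.2).1 h)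

section CosKernel

variable {a : ℕ → ℝ}

lemma cosKernel_eq_re_tsum (ha : Summable a) (θ t : ℝ) :
    cosKernel a θ t = (Complex.exp (-θ * Complex.I) * Complex.exp (t * Complex.I) *
      ∑' k, (a k : ℂ) * Complex.exp (t * Complex.I) ^ k).re := by
  rw [← tsum_mul_left, Complex.re_tsum
    ((summable_ofReal_mul_pow ha (Complex.norm_exp_ofReal_mul_I t).le).mul_left _)]
  refine tsum_congr fun k => ?_
  have hterm : Complex.exp (-θ * Complex.I) * Complex.exp (t * Complex.I) *
      ((a k : ℂ) * Complex.exp (t * Complex.I) ^ k) =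
        a k * Complex.exp (((((k : ℝ) + 1) * t - θ : ℝ) : ℂ) * Complex.I) := by
    rw [← Complex.exp_nat_mul, ← Complex.exp_add, mul_left_comm, ← Complex.exp_add]
    push_cast
    ring_nf
  rw [hterm, Complex.re_ofReal_mul, Complex.exp_ofReal_mul_I_re]

lemma analyticOnNhd_cosKernel (ha : Summable a) (hm : ∀ m, IsMultiplyMonotone m a) (θ : ℝ) :
    AnalyticOnNhd ℝ (cosKernel a θ) (Set.Ioo 0 (2 * π)) := by
  have hre {t : ℝ} (ht : t ∈ Set.Ioo 0 (2 * π)) : (Complex.exp (t * Complex.I)).re < 1 := by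
    rw [Complex.exp_ofReal_mul_I_re]
    exact cos_lt_one_of_mem_Ioo ht
  have hcontinuation : AnalyticOnNhd ℝ (fun t : ℝ => (Complex.exp (-θ * Complex.I) *
      Complex.exp (t * Complex.I) * eulerContinuation a (Complex.exp (t * Complex.I))).re)
      (Set.Ioo 0 (2 * π)) := by
    intro t ht
    have hexp : AnalyticAt ℂ (fun s : ℂ => Complex.exp (s * Complex.I)) t := by fun_prop
    have hprod := (analyticAt_const (v := Complex.exp (-θ * Complex.I))).fun_mul hexp |>.fun_mul
      (AnalyticAt.fun_comp (f := fun s : ℂ => Complex.exp (s * Complex.I))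
        (analyticAt_eulerContinuation hm (hre ht)) hexp)
    exact (Complex.reCLM.analyticAt _).fun_comp ((hprod.restrictScalars (𝕜 := ℝ)).fun_comp
      (f := fun s : ℝ => (s : ℂ)) (Complex.ofRealCLM.analyticAt t))
  refine hcontinuation.congr isOpen_Ioo fun t ht => ?_
  rw [cosKernel_eq_re_tsum ha, tsum_mul_pow_eq_eulerContinuation ha hm
    (Complex.norm_exp_ofReal_mul_I t).le (hre ht)]

lemma not_eqOn_cosKernel_zero (ha : Summable a) (ha0 : a ≠ 0) (θ : ℝ) :
    ¬ Set.EqOn (cosKernel a θ) 0 (Set.Ioo 0 (2 * π)) := by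
  intro hzero
  refine ha0 (funext fun k => ?_)
  have hcoeff := integral_cosKernel_mul_cos ha θ θ k
  have hper : Function.Periodic
      (fun t => cosKernel a θ t * cos (((k : ℝ) + 1) * t - θ)) (2 * π) := by
    intro t
    simp only [periodic_cosKernel a θ t]
    congr 1
    rw [← cos_add_nat_mul_two_pi (((k : ℝ) + 1) * t - θ) (k + 1)]
    push_cast
    ring_nf
  have hperiod := hper.intervalIntegral_add_eq (-π) 0
  rw [show -π + 2 * π = π by ring, zero_add, hcoeff, intervalIntegral.integral_of_le two_pi_pos.le,
    integral_Ioc_eq_integral_Ioo, setIntegral_eq_zero_of_forall_eq_zero fun t ht => by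
      rw [hzero ht, Pi.zero_apply, zero_mul]] at hperiod
  simpa [pi_ne_zero] using hperiod

lemma ae_cosKernel_ne_zero (ha : Summable a) (hm : ∀ m, IsMultiplyMonotone m a) (ha0 : a ≠ 0)
    (θ : ℝ) : ∀ᵐ t, cosKernel a θ t ≠ 0 := by
  have hcodiscrete := (analyticOnNhd_cosKernel ha hm θ
    |>.eqOn_zero_or_eventually_ne_zero_of_preconnected isPreconnected_Ioo).resolve_left
      (not_eqOn_cosKernel_zero ha ha0 θ)
  have hIoo : ∀ᵐ t ∂volume.restrict (Set.Ioo 0 (2 * π)), cosKernel a θ t ≠ 0 :=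
    ae_restrict_le_codiscreteWithin measurableSet_Ioo hcodiscrete
  rw [restrict_Ioo_eq_restrict_Ioc] at hIoo
  exact ae_of_periodic_of_ae_Ioc two_pi_pos ((periodic_cosKernel a θ).comp (· ≠ 0)) hIoo

lemma ae_cosKernel_const_sub_ne_zero (ha : Summable a) (hm : ∀ m, IsMultiplyMonotone m a)
    (ha0 : a ≠ 0) (θ x : ℝ) : ∀ᵐ t, cosKernel a θ (x - t) ≠ 0 :=
  (volume.measurePreserving_sub_left x).quasiMeasurePreserving.ae (ae_cosKernel_ne_zero ha hm ha0 θ)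

end CosKernel

/-! ### Fourier sums of convolutions -/

lemma hasSum_indicator_Ici {b : ℕ → ℝ} {s : ℝ} (hb : HasSum b s) (m : ℕ) :
    HasSum ((Set.Ici m).indicator b) (s - ∑ k ∈ Finset.range m, b k) := by
  have hhead : HasSum ((Set.Iio m).indicator b) (∑ k ∈ Finset.range m, b k) := by
    rw [← hasSum_subtype_iff_indicator, ← Finset.coe_range]
    exact (Finset.range m).hasSum b
  rw [← Set.compl_Iio, Set.indicator_compl]
  exact hb.sub hhead

lemma tsum_indicator_Ici_sq (a : ℕ → ℝ) (m : ℕ) :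
    ∑' k, (Set.Ici m).indicator a k ^ 2 = ∑' k, a (k + m) ^ 2 := by
  have hsupport : (Function.support fun k => (Set.Ici m).indicator a k ^ 2) ⊆
      Set.range fun k => k + m := by
    intro k hk
    have hkm : m ≤ k := by
      by_contra hkm
      exact hk (by simp [hkm])
    exact ⟨k - m, Nat.sub_add_cancel hkm⟩
  rw [← (add_left_injective m).tsum_eq hsupport]
  simp

/-- The sum of the trigonometric series
`A / 2 + ∑ (p k * cos ((k + 1) * x) + q k * sin ((k + 1) * x))`; the sines are encoded as cosines of
phase `π / 2`. -/
noncomputable def trigSeries (A : ℝ) (p q : ℕ → ℝ) (x : ℝ) : ℝ :=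
  A / 2 + (cosKernel p 0 x + cosKernel q (π / 2) x)

section TrigSeries

variable {p q : ℕ → ℝ}

lemma hasSum_trigSeries_sub (hp : Summable p) (hq : Summable q) (A x : ℝ) :
    HasSum (fun k : ℕ => p k * cos (((k : ℝ) + 1) * x) + q k * sin (((k : ℝ) + 1) * x))
      (trigSeries A p q x - A / 2) := by
  simpa only [sub_zero, cos_sub_pi_div_two, trigSeries, add_sub_cancel_left] using
    (hasSum_cosKernel hp 0 x).add (hasSum_cosKernel hq (π / 2) x)

lemma integral_trigSeries (hp : Summable p) (hq : Summable q) (A : ℝ) :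
    ∫ t in (-π)..π, trigSeries A p q t = π * A := by
  have hpc := (continuous_cosKernel hp 0).intervalIntegrable (μ := volume) (-π) π
  have hqc := (continuous_cosKernel hq (π / 2)).intervalIntegrable (μ := volume) (-π) π
  simp only [trigSeries]
  rw [intervalIntegral.integral_add intervalIntegrable_const (hpc.add hqc),
    intervalIntegral.integral_add hpc hqc, integral_cosKernel hp, integral_cosKernel hq,
    intervalIntegral.integral_const, smul_eq_mul]
  ring

lemma integral_trigSeries_mul_cos (hp : Summable p) (hq : Summable q) (A v : ℝ) (j : ℕ) :
    ∫ t in (-π)..π, trigSeries A p q t * cos (((j : ℝ) + 1) * t - v) =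
      π * (p j * cos v + q j * sin v) := by
  have hpc := continuous_cosKernel hp 0
  have hqc := continuous_cosKernel hq (π / 2)
  simp only [trigSeries, add_mul (A / 2), add_mul (cosKernel p 0 _)]
  rw [intervalIntegral.integral_add (Continuous.intervalIntegrable (by fun_prop) _ _)
      (Continuous.intervalIntegrable (by fun_prop) _ _),
    intervalIntegral.integral_add (Continuous.intervalIntegrable (by fun_prop) _ _)
      (Continuous.intervalIntegrable (by fun_prop) _ _),
    intervalIntegral.integral_const_mul, integral_cos_succ_mul_sub, integral_cosKernel_mul_cos hp,
    integral_cosKernel_mul_cos hq, zero_sub, cos_neg, cos_pi_div_two_sub]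
  ring

lemma fourierCoefA_zero_trigSeries (hp : Summable p) (hq : Summable q) (A : ℝ) :
    fourierCoefA (trigSeries A p q) 0 = A := by
  simp [fourierCoefA, integral_trigSeries hp hq, pi_ne_zero]

lemma fourierCoefA_succ_trigSeries (hp : Summable p) (hq : Summable q) (A : ℝ) (k : ℕ) :
    fourierCoefA (trigSeries A p q) (k + 1) = p k := by
  have h := integral_trigSeries_mul_cos hp hq A 0 k
  simp only [sub_zero, cos_zero, sin_zero, mul_one, mul_zero, add_zero] at h
  rw [fourierCoefA, Nat.cast_add_one, h, one_div, inv_mul_cancel_left₀ pi_ne_zero]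

lemma fourierCoefB_succ_trigSeries (hp : Summable p) (hq : Summable q) (A : ℝ) (k : ℕ) :
    fourierCoefB (trigSeries A p q) (k + 1) = q k := by
  have h := integral_trigSeries_mul_cos hp hq A (π / 2) k
  simp only [cos_sub_pi_div_two, cos_pi_div_two, sin_pi_div_two, mul_one, mul_zero, zero_add] at h
  rw [fourierCoefB, Nat.cast_add_one, h, one_div, inv_mul_cancel_left₀ pi_ne_zero]

lemma fourierSum_trigSeries (hp : Summable p) (hq : Summable q) (A : ℝ) (m : ℕ) (x : ℝ) :
    fourierSum m (trigSeries A p q) x = A / 2 + ∑ k ∈ Finset.range m,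
      (p k * cos (((k : ℝ) + 1) * x) + q k * sin (((k : ℝ) + 1) * x)) := by
  rw [fourierSum, fourierCoefA_zero_trigSeries hp hq, ← Finset.Ico_add_one_right_eq_Icc,
    Finset.sum_Ico_eq_sum_range, Nat.add_sub_cancel]
  simp only [add_comm 1, fourierCoefA_succ_trigSeries hp hq, fourierCoefB_succ_trigSeries hp hq,
    Nat.cast_add_one]

end TrigSeries

/-- The moment `∫ cos ((k + 1) * t - u) * φ t` of `φ` over a period: a Fourier coefficient of `φ`
with phase `u`. -/
noncomputable def cosMoment (φ : ℝ → ℝ) (u : ℝ) (k : ℕ) : ℝ :=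
  ∫ t in (-π)..π, cos (((k : ℝ) + 1) * t - u) * φ t

section Convolution

variable {a : ℕ → ℝ} {φ : ℝ → ℝ}

lemma summable_mul_cosMoment (ha : Summable a) (hφ : IntervalIntegrable φ volume (-π) π) (u : ℝ) :
    Summable fun k => a k * cosMoment φ u k :=
  (hasSum_integral_cosKernel_comp_mul ha u continuous_id hφ).summable

lemma integral_cos_const_sub_mul (hφ : IntervalIntegrable φ volume (-π) π) (θ x : ℝ) (k : ℕ) :
    ∫ t in (-π)..π, cos (((k : ℝ) + 1) * (x - t) - θ) * φ t =
      cosMoment φ (-θ) k * cos (((k : ℝ) + 1) * x) +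
        cosMoment φ (π / 2 - θ) k * sin (((k : ℝ) + 1) * x) := by
  have hexpand (t : ℝ) : cos (((k : ℝ) + 1) * (x - t) - θ) * φ t =
      cos (((k : ℝ) + 1) * t - -θ) * φ t * cos (((k : ℝ) + 1) * x) +
        cos (((k : ℝ) + 1) * t - (π / 2 - θ)) * φ t * sin (((k : ℝ) + 1) * x) := by
    rw [show ((k : ℝ) + 1) * t - (π / 2 - θ) = ((k : ℝ) + 1) * t - -θ - π / 2 by ring,
      cos_sub_pi_div_two,
      show ((k : ℝ) + 1) * (x - t) - θ = ((k : ℝ) + 1) * x - (((k : ℝ) + 1) * t - -θ) by ring,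
      cos_sub (((k : ℝ) + 1) * x)]
    ring
  have hint (u : ℝ) :
      IntervalIntegrable (fun t => cos (((k : ℝ) + 1) * t - u) * φ t) volume (-π) π :=
    hφ.continuousOn_mul (Continuous.continuousOn (by fun_prop))
  simp_rw [hexpand]
  rw [intervalIntegral.integral_add ((hint _).mul_const _) ((hint _).mul_const _),
    intervalIntegral.integral_mul_const, intervalIntegral.integral_mul_const, cosMoment, cosMoment]

lemma convolution_eq_trigSeries (ha : Summable a) (hφ : IntervalIntegrable φ volume (-π) π)
    (A θ x : ℝ) :
    A / 2 + 1 / π * ∫ t in (-π)..π, cosKernel a θ (x - t) * φ t =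
      trigSeries A (fun k => 1 / π * (a k * cosMoment φ (-θ) k))
        (fun k => 1 / π * (a k * cosMoment φ (π / 2 - θ) k)) x := by
  have hconv := (hasSum_integral_cosKernel_comp_mul ha θ (continuous_const.sub continuous_id)
    (g := fun t => x - t) hφ).mul_left (1 / π)
  have hseries := hasSum_trigSeries_sub ((summable_mul_cosMoment ha hφ (-θ)).mul_left (1 / π))
    ((summable_mul_cosMoment ha hφ (π / 2 - θ)).mul_left (1 / π)) A x
  rw [← eq_sub_iff_add_eq']
  refine hconv.unique (hseries.congr_fun fun k => ?_)
  rw [integral_cos_const_sub_mul hφ]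
  ring

lemma convolution_sub_fourierSum (ha : Summable a) (hφ : IntervalIntegrable φ volume (-π) π)
    (θ : ℝ) {f : ℝ → ℝ} {A : ℝ}
    (hf : ∀ x, f x = A / 2 + 1 / π * ∫ t in (-π)..π, cosKernel a θ (x - t) * φ t) (m : ℕ) (x : ℝ) :
    f x - fourierSum m f x =
      1 / π * ∫ t in (-π)..π, cosKernel ((Set.Ici m).indicator a) θ (x - t) * φ t := by
  have hf' : f = trigSeries A _ _ := funext fun x => by
    rw [hf x, convolution_eq_trigSeries ha hφ A θ x]
  have hp := (summable_mul_cosMoment ha hφ (-θ)).mul_left (1 / π)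
  have hq := (summable_mul_cosMoment ha hφ (π / 2 - θ)).mul_left (1 / π)
  have htail := (hasSum_integral_cosKernel_comp_mul (ha.indicator (Set.Ici m)) θ
    (continuous_const.sub continuous_id) (g := fun t => x - t) hφ).mul_left (1 / π)
  have hseries := hasSum_indicator_Ici (hasSum_trigSeries_sub hp hq A x) m
  rw [hf', fourierSum_trigSeries hp hq, ← sub_sub]
  refine hseries.unique (htail.congr_fun fun k => ?_)
  rw [integral_cos_const_sub_mul hφ]
  by_cases hk : k ∈ Set.Ici m
  · rw [Set.indicator_of_mem hk, Set.indicator_of_mem hk]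
    ring
  · rw [Set.indicator_of_notMem hk, Set.indicator_of_notMem hk]
    ring

end Convolution

/-! ### The extremal problem in `L²` -/

section SquareIntegrable

variable {X : Type*} [MeasurableSpace X] {μ : Measure X} {f g : X → ℝ}

lemma abs_integral_mul_le_sqrt_mul_sqrt (hf : MemLp f 2 μ) (hg : MemLp g 2 μ) :
    |∫ x, f x * g x ∂μ| ≤ √(∫ x, f x ^ 2 ∂μ) * √(∫ x, g x ^ 2 ∂μ) := by
  have hholder := integral_mul_norm_le_Lp_mul_Lq (μ := μ) (f := f) (g := g)
    (HolderConjugate.two_two) (by simpa using hf) (by simpa using hg)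
  simp only [rpow_ofNat, norm_eq_abs, sq_abs, ← sqrt_eq_rpow] at hholder
  refine (abs_integral_le_integral_abs).trans ?_
  simpa only [abs_mul] using hholder

lemma eLpNorm_two_le_one_iff (hf : MemLp f 2 μ) : eLpNorm f 2 μ ≤ 1 ↔ ∫ x, f x ^ 2 ∂μ ≤ 1 := by
  rw [hf.eLpNorm_eq_integral_rpow_norm two_ne_zero ENNReal.ofNat_ne_top, ENNReal.ofReal_le_one]
  simp only [ENNReal.toReal_ofNat, rpow_ofNat, norm_eq_abs, sq_abs, ← one_div, ← sqrt_eq_rpow,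
    sqrt_le_one]

end SquareIntegrable

lemma eLpNorm_restrict_Ioc_of_periodic {φ : ℝ → ℝ} {T : ℝ} (hφ : Function.Periodic φ T) (hT : 0 < T)
    {p : ℝ≥0∞} (hp0 : p ≠ 0) (hp : p ≠ ∞) (s t : ℝ) :
    eLpNorm φ p (volume.restrict (Set.Ioc s (s + T))) =
      eLpNorm φ p (volume.restrict (Set.Ioc t (t + T))) := by
  rw [eLpNorm_eq_lintegral_rpow_enorm_toReal hp0 hp, eLpNorm_eq_lintegral_rpow_enorm_toReal hp0 hp]
  congr 1
  refine (isAddFundamentalDomain_Ioc hT s).setLIntegral_eq (isAddFundamentalDomain_Ioc hT t) _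
    fun j x => ?_
  rw [hφ.map_vadd_zmultiples j x]

lemma memLp_two_restrict_Ioc_of_continuous {g : ℝ → ℝ} (hg : Continuous g) (s t : ℝ) :
    MemLp g 2 (volume.restrict (Set.Ioc s t)) :=
  (memLp_two_iff_integrable_sq hg.aestronglyMeasurable).2
    ((hg.pow 2).integrableOn_Ioc)

section Extremal

variable {b : ℕ → ℝ} {φ : ℝ → ℝ}

lemma integral_sq_cosKernel_const_sub (hb : Summable b) (θ x : ℝ) :
    ∫ t in (-π)..π, cosKernel b θ (x - t) ^ 2 = π * ∑' k, b k ^ 2 := by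
  rw [← integral_sq_cosKernel hb θ]
  exact integral_comp_const_sub_of_periodic ((periodic_cosKernel b θ).comp (· ^ 2)) x

lemma abs_convolution_le (hb : Summable b) (hφ : MemLp φ 2 (volume.restrict (Set.Ioc (-π) π)))
    (hφ1 : ∫ t in (-π)..π, φ t ^ 2 ≤ 1) (θ x : ℝ) :
    |1 / π * ∫ t in (-π)..π, cosKernel b θ (x - t) * φ t| ≤ √((∑' k, b k ^ 2) / π) := by
  have hpi : -π ≤ π := by linarith [pi_pos]
  have hK := memLp_two_restrict_Ioc_of_continuous
    (g := fun t => cosKernel b θ (x - t)) ((continuous_cosKernel hb θ).comp (by fun_prop)) (-π) π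
  have hcauchy := abs_integral_mul_le_sqrt_mul_sqrt hK hφ
  simp only [← intervalIntegral.integral_of_le hpi, integral_sq_cosKernel_const_sub hb] at hcauchy
  rw [abs_mul, abs_of_pos (by positivity : 0 < 1 / π)]
  calc 1 / π * |∫ t in (-π)..π, cosKernel b θ (x - t) * φ t|
    _ ≤ 1 / π * (√(π * ∑' k, b k ^ 2) * 1) := by
        gcongr
        exact hcauchy.trans (by gcongr; exact sqrt_le_one.2 hφ1)
    _ = √((∑' k, b k ^ 2) / π) := by
        rw [mul_one, sqrt_mul pi_pos.le, sqrt_div' _ pi_pos.le]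
        field_simp
        rw [sq_sqrt pi_pos.le]

/-- The reflected kernel `t ↦ cosKernel b θ (-t)` with its norm in `L²(-π, π)` scaled to `1`: the
density for which the Cauchy–Schwarz bound of the convolution is attained at `0`. It is `0` when
the kernel is. -/
noncomputable def extremalDensity (b : ℕ → ℝ) (θ t : ℝ) : ℝ :=
  cosKernel b θ (0 - t) / √(π * ∑' k, b k ^ 2)

lemma continuous_extremalDensity (hb : Summable b) (θ : ℝ) : Continuous (extremalDensity b θ) :=
  ((continuous_cosKernel hb θ).comp (by fun_prop)).div_const _

lemma periodic_extremalDensity (b : ℕ → ℝ) (θ : ℝ) :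
    Function.Periodic (extremalDensity b θ) (2 * π) := by
  intro t
  rw [extremalDensity, ← sub_sub, (periodic_cosKernel b θ).sub_eq, extremalDensity]

lemma integral_extremalDensity (hb : Summable b) (θ : ℝ) :
    ∫ t in (-π)..π, extremalDensity b θ t = 0 := by
  simp only [extremalDensity]
  rw [intervalIntegral.integral_div, integral_comp_const_sub_of_periodic (periodic_cosKernel b θ),
    integral_cosKernel hb, zero_div]

lemma integral_sq_extremalDensity_le_one (hb : Summable b) (θ : ℝ) :
    ∫ t in (-π)..π, extremalDensity b θ t ^ 2 ≤ 1 := by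
  have hnonneg : 0 ≤ π * ∑' k, b k ^ 2 := mul_nonneg pi_pos.le (tsum_nonneg fun _ => sq_nonneg _)
  simp only [extremalDensity, div_pow, sq_sqrt hnonneg]
  rw [intervalIntegral.integral_div, integral_sq_cosKernel_const_sub hb]
  exact div_self_le_one _

lemma convolution_extremalDensity (hb : Summable b) (θ : ℝ) :
    1 / π * ∫ t in (-π)..π, cosKernel b θ (0 - t) * extremalDensity b θ t =
      √((∑' k, b k ^ 2) / π) := by
  simp only [extremalDensity, ← mul_div_assoc, ← sq]
  rw [intervalIntegral.integral_div, integral_sq_cosKernel_const_sub hb, div_sqrt,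
    sqrt_mul pi_pos.le, sqrt_div' _ pi_pos.le]
  field_simp
  rw [sq_sqrt pi_pos.le]

end Extremal

/-! ### Tail sums of `exp (-c * x ^ r)` -/

lemma le_tsum_of_sub_le {G h : ℕ → ℝ} (hG : Tendsto G atTop (nhds 0)) (hh : Summable h)
    (hstep : ∀ k, G k - G (k + 1) ≤ h k) : G 0 ≤ ∑' k, h k := by
  have hpartial (N : ℕ) : G 0 - G N ≤ ∑ k ∈ Finset.range N, h k := by
    rw [← Finset.sum_range_sub']
    exact Finset.sum_le_sum fun k _ => hstep k
  simpa using le_of_tendsto_of_tendsto' (hG.const_sub (G 0)) hh.hasSum.tendsto_sum_nat hpartial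

lemma tsum_le_of_le_sub {G h : ℕ → ℝ} (hG : Tendsto G atTop (nhds 0)) (hh : Summable h)
    (hstep : ∀ k, h k ≤ G k - G (k + 1)) : ∑' k, h k ≤ G 0 := by
  have hneg := le_tsum_of_sub_le (G := fun k => -G k) (by simpa using hG.neg) hh.neg
    fun k => by linarith [hstep k]
  simpa [tsum_neg] using hneg

section TailSum

variable {c r : ℝ}

lemma tendsto_exp_neg_mul_rpow_mul_rpow (hc : 0 < c) (hr : 0 < r) (s : ℝ) :
    Tendsto (fun x : ℝ => exp (-c * x ^ r) * x ^ s) atTop (nhds 0) := by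
  refine ((tendsto_rpow_mul_exp_neg_mul_atTop_nhds_zero (s / r) c hc).comp
    (tendsto_rpow_atTop hr)).congr' ?_
  filter_upwards [eventually_ge_atTop 0] with x hx
  rw [Function.comp_apply, ← rpow_mul hx, mul_div_cancel₀ _ hr.ne', mul_comm]

lemma exp_neg_mul_rpow_le (hc : 0 ≤ c) (hr : 0 ≤ r) {x y : ℝ} (hx : 0 ≤ x) (hxy : x ≤ y) :
    exp (-c * y ^ r) ≤ exp (-c * x ^ r) :=
  exp_le_exp.2 (mul_le_mul_of_nonpos_left (rpow_le_rpow hx hxy hr) (neg_nonpos.2 hc))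

lemma summable_exp_neg_mul_rpow (hc : 0 < c) (hr : 0 < r) {x : ℝ} (hx : 0 ≤ x) :
    Summable fun k : ℕ => exp (-c * (x + k) ^ r) := by
  have hnat : Summable fun k : ℕ => exp (-c * (k : ℝ) ^ r) := by
    have hlim := ((tendsto_exp_neg_mul_rpow_mul_rpow hc hr 2).comp
      tendsto_natCast_atTop_atTop).eventually (gt_mem_nhds zero_lt_one)
    refine summable_of_isBigO_nat (summable_one_div_nat_pow.2 one_lt_two)
      (Asymptotics.IsBigO.of_bound 1 ?_)
    filter_upwards [hlim, eventually_gt_atTop 0] with k hk hk0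
    rw [norm_of_nonneg (exp_nonneg _), norm_of_nonneg (by positivity), one_mul,
      le_div_iff₀ (by positivity)]
    simpa only [Function.comp_apply, rpow_ofNat] using hk.le
  exact Summable.of_nonneg_of_le (fun _ => exp_nonneg _)
    (fun k => exp_neg_mul_rpow_le hc.le hr.le k.cast_nonneg (le_add_of_nonneg_left hx)) hnat

/-- The leading term of the asymptotics of `∑ exp (-c * (x + k) ^ r)` as `x → ∞`. -/
noncomputable def leadingTail (c r x : ℝ) : ℝ :=
  exp (-c * x ^ r) * x ^ (1 - r) / (c * r)

lemma tendsto_leadingTail (hc : 0 < c) (hr : 0 < r) :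
    Tendsto (leadingTail c r) atTop (nhds 0) := by
  rw [← zero_div (c * r)]
  exact (tendsto_exp_neg_mul_rpow_mul_rpow hc hr (1 - r)).div_const (c * r)

lemma hasDerivAt_leadingTail (hc : c ≠ 0) (hr : r ≠ 0) {x : ℝ} (hx : 0 < x) :
    HasDerivAt (leadingTail c r)
      (-(exp (-c * x ^ r) * (1 - (1 - r) * (x ^ (-r) / (c * r))))) x := by
  have hexp := ((hasDerivAt_rpow_const (p := r) (Or.inl hx.ne')).const_mul (-c)).exp
  have hpow := hasDerivAt_rpow_const (p := 1 - r) (Or.inl hx.ne')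
  refine ((hexp.mul hpow).div_const (c * r)).congr_deriv ?_
  have hinv : x ^ (r - 1) * x ^ (1 - r) = 1 := by
    rw [← rpow_add hx, sub_add_sub_cancel, sub_self, rpow_zero]
  rw [show 1 - r - 1 = -r by ring]
  field_simp
  linear_combination -c * r * hinv

lemma exists_leadingTail_sub_eq (hc : c ≠ 0) (hr : r ≠ 0) {x : ℝ} (hx : 0 < x) :
    ∃ ξ ∈ Set.Ioo x (x + 1), leadingTail c r x - leadingTail c r (x + 1) =
      exp (-c * ξ ^ r) * (1 - (1 - r) * (ξ ^ (-r) / (c * r))) := by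
  have hderiv {y : ℝ} (hy : x ≤ y) := hasDerivAt_leadingTail hc hr (hx.trans_le hy)
  obtain ⟨ξ, hξ, hslope⟩ := exists_hasDerivAt_eq_slope (leadingTail c r) _ (lt_add_one x)
    (fun y hy => (hderiv hy.1).continuousAt.continuousWithinAt) fun y hy => hderiv hy.1.le
  refine ⟨ξ, hξ, ?_⟩
  rw [add_sub_cancel_left, div_one] at hslope
  linarith

lemma leadingTail_sub_le (hc : 0 < c) (hr0 : 0 < r) (hr1 : r ≤ 1) {x : ℝ} (hx : 0 < x) :
    leadingTail c r x - leadingTail c r (x + 1) ≤ exp (-c * x ^ r) := by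
  obtain ⟨ξ, hξ, h⟩ := exists_leadingTail_sub_eq hc.ne' hr0.ne' hx
  have hξ0 := hx.trans hξ.1
  have hcorr : 0 ≤ (1 - r) * (ξ ^ (-r) / (c * r)) :=
    mul_nonneg (sub_nonneg.2 hr1) (by positivity)
  rw [h]
  exact (mul_le_of_le_one_right (exp_nonneg _) (by linarith)).trans
    (exp_neg_mul_rpow_le hc.le hr0.le hx.le hξ.1.le)

lemma le_leadingTail_sub (hc : 0 < c) (hr : 0 < r) {x y : ℝ} (hx : 0 < x) (hxy : x ≤ y)
    (hq : x ^ (-r) / (c * r) ≤ 1) :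
    (1 - x ^ (-r) / (c * r)) * exp (-c * (y + 1) ^ r) ≤
      leadingTail c r y - leadingTail c r (y + 1) := by
  obtain ⟨ξ, hξ, h⟩ := exists_leadingTail_sub_eq hc.ne' hr.ne' (hx.trans_le hxy)
  have hξ0 := hx.trans_le (hxy.trans hξ.1.le)
  have hcorr : (1 - r) * (ξ ^ (-r) / (c * r)) ≤ x ^ (-r) / (c * r) :=
    calc (1 - r) * (ξ ^ (-r) / (c * r))
      _ ≤ ξ ^ (-r) / (c * r) := mul_le_of_le_one_left (by positivity) (sub_le_self 1 hr.le)
      _ ≤ x ^ (-r) / (c * r) := div_le_div_of_nonneg_right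
          (rpow_le_rpow_of_nonpos hx (hxy.trans hξ.1.le) (neg_nonpos.2 hr.le)) (by positivity)
  rw [h, mul_comm]
  exact mul_le_mul (exp_neg_mul_rpow_le hc.le hr.le hξ0.le hξ.2.le) (by linarith) (by linarith)
    (exp_nonneg _)

variable {x : ℝ}

lemma tendsto_leadingTail_add_natCast (hc : 0 < c) (hr : 0 < r) (x : ℝ) :
    Tendsto (fun k : ℕ => leadingTail c r (x + k)) atTop (nhds 0) :=
  (tendsto_leadingTail hc hr).comp (tendsto_atTop_add_const_left _ x tendsto_natCast_atTop_atTop)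

lemma leadingTail_le_tsum (hc : 0 < c) (hr0 : 0 < r) (hr1 : r ≤ 1) (hx : 0 < x) :
    leadingTail c r x ≤ ∑' k : ℕ, exp (-c * (x + k) ^ r) := by
  have h := le_tsum_of_sub_le (tendsto_leadingTail_add_natCast hc hr0 x)
    (summable_exp_neg_mul_rpow hc hr0 hx.le) fun k => by
      rw [Nat.cast_add_one, ← add_assoc]
      exact leadingTail_sub_le hc hr0 hr1 (by positivity)
  simpa using h

lemma tsum_le_leadingTail (hc : 0 < c) (hr : 0 < r) (hx : 0 < x)
    (hq : x ^ (-r) / (c * r) ≤ 1) :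
    (1 - x ^ (-r) / (c * r)) * (∑' k : ℕ, exp (-c * (x + k) ^ r) - exp (-c * x ^ r)) ≤
      leadingTail c r x := by
  have hsum := summable_exp_neg_mul_rpow hc hr hx.le
  have h := tsum_le_of_le_sub (tendsto_leadingTail_add_natCast hc hr x)
    (((summable_nat_add_iff 1).2 hsum).mul_left (1 - x ^ (-r) / (c * r))) fun k => by
      rw [Nat.cast_add_one, ← add_assoc]
      exact le_leadingTail_sub hc hr hx (le_add_of_nonneg_right k.cast_nonneg) hq
  rw [hsum.tsum_eq_zero_add, Nat.cast_zero, add_zero, add_sub_cancel_left, ← tsum_mul_left]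
  simpa using h

end TailSum

/-! ### The class of generalized Poisson integrals -/

-- Dividing by the kernel would recover the measurability of `φ`, so the integrand is not
-- integrable and the Bochner integral takes its default value.
lemma integral_cosKernel_mul_eq_zero {a : ℕ → ℝ} (ha : Summable a)
    (hm : ∀ m, IsMultiplyMonotone m a) (ha0 : a ≠ 0) {φ : ℝ → ℝ}
    (hφ : ¬ AEStronglyMeasurable φ (volume.restrict (Set.Ioc (-π) π))) (θ x : ℝ) :
    ∫ t in (-π)..π, cosKernel a θ (x - t) * φ t = 0 := by
  rw [intervalIntegral.integral_of_le (by linarith [pi_pos])]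
  refine integral_undef fun hint => hφ ?_
  have hK : Continuous fun t => cosKernel a θ (x - t) :=
    (continuous_cosKernel ha θ).comp (by fun_prop)
  refine (hK.measurable.inv.aestronglyMeasurable.mul hint.aestronglyMeasurable).congr ?_
  filter_upwards [ae_restrict_of_ae (ae_cosKernel_const_sub_ne_zero ha hm ha0 θ x)] with t ht
  exact inv_mul_cancel_left₀ ht (φ t)

/-- The multipliers `exp (-α * k ^ r)`, `k ≥ 1`, of the generalized Poisson kernel, indexed
from `0`. -/
noncomputable def poissonCoeff (α r : ℝ) (k : ℕ) : ℝ :=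
  exp (-α * ((k : ℝ) + 1) ^ r)

lemma genPoissonKernel_eq_cosKernel (α r β : ℝ) :
    genPoissonKernel α r β = cosKernel (poissonCoeff α r) (β * π / 2) :=
  rfl

section PoissonClass

variable {α r : ℝ}

lemma poissonCoeff_ne_zero (α r : ℝ) : poissonCoeff α r ≠ 0 :=
  fun h => (exp_pos _).ne' (congrFun h 0)

lemma summable_poissonCoeff (hα : 0 < α) (hr : 0 < r) : Summable (poissonCoeff α r) := by
  unfold poissonCoeff
  simpa only [add_comm (1 : ℝ)] using summable_exp_neg_mul_rpow hα hr zero_le_one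

lemma isMultiplyMonotone_poissonCoeff (hα : 0 ≤ α) (hr0 : 0 < r) (hr1 : r ≤ 1) (m : ℕ) :
    IsMultiplyMonotone m (poissonCoeff α r) := by
  unfold poissonCoeff
  simpa only [add_comm (1 : ℝ), ← neg_mul] using
    IsMultiplyMonotone.exp_neg_mul_rpow (m := m) hα hr0 hr1 zero_le_one

lemma tsum_poissonCoeff_add_sq (α r : ℝ) (m : ℕ) :
    ∑' k, poissonCoeff α r (k + m) ^ 2 =
      ∑' k : ℕ, exp (-(2 * α) * (((m + 1 : ℕ) : ℝ) + k) ^ r) := by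
  refine tsum_congr fun k => ?_
  rw [poissonCoeff, ← exp_nat_mul]
  push_cast
  ring_nf

lemma exists_memLp_density (hα : 0 < α) (hr0 : 0 < r) (hr1 : r ≤ 1) {β : ℝ} {f : ℝ → ℝ}
    (hf : f ∈ poissonClass α r β 2) :
    ∃ (A : ℝ) (φ : ℝ → ℝ), MemLp φ 2 (volume.restrict (Set.Ioc (-π) π)) ∧
      ∫ t in (-π)..π, φ t ^ 2 ≤ 1 ∧ ∀ x, f x = A / 2 + 1 / π *
        ∫ t in (-π)..π, cosKernel (poissonCoeff α r) (β * π / 2) (x - t) * φ t := by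
  obtain ⟨-, A, φ, hper, hnorm, -, hrep⟩ := hf
  by_cases hφ : AEStronglyMeasurable φ (volume.restrict (Set.Ioc (-π) π))
  · have hshift := eLpNorm_restrict_Ioc_of_periodic hper two_pi_pos two_ne_zero
      ENNReal.ofNat_ne_top 0 (-π)
    rw [zero_add, show -π + 2 * π = π by ring] at hshift
    rw [hshift] at hnorm
    have hLp : MemLp φ 2 (volume.restrict (Set.Ioc (-π) π)) :=
      ⟨hφ, hnorm.trans_lt ENNReal.one_lt_top⟩
    refine ⟨A, φ, hLp, ?_, hrep⟩
    rw [intervalIntegral.integral_of_le (by linarith [pi_pos])]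
    exact (eLpNorm_two_le_one_iff hLp).1 hnorm
  · refine ⟨A, 0, MemLp.zero, by simp, fun x => ?_⟩
    rw [hrep x, genPoissonKernel_eq_cosKernel,
      integral_cosKernel_mul_eq_zero (summable_poissonCoeff hα hr0)
        (isMultiplyMonotone_poissonCoeff hα.le hr0 hr1) (poissonCoeff_ne_zero α r) hφ]
    simp

lemma abs_sub_fourierSum_le (hα : 0 < α) (hr0 : 0 < r) (hr1 : r ≤ 1) {β : ℝ} {f : ℝ → ℝ}
    (hf : f ∈ poissonClass α r β 2) (m : ℕ) (x : ℝ) :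
    |f x - fourierSum m f x| ≤ √((∑' k, poissonCoeff α r (k + m) ^ 2) / π) := by
  obtain ⟨A, φ, hφ, hφ1, hrep⟩ := exists_memLp_density hα hr0 hr1 hf
  have ha := summable_poissonCoeff hα hr0
  have hint : IntervalIntegrable φ volume (-π) π :=
    (intervalIntegrable_iff_integrableOn_Ioc_of_le (by linarith [pi_pos])).2
      (hφ.integrable one_le_two)
  rw [convolution_sub_fourierSum ha hint _ hrep, ← tsum_indicator_Ici_sq]
  exact abs_convolution_le (ha.indicator _) hφ hφ1 _ x

lemma exists_mem_poissonClass_sub_fourierSum_eq (hα : 0 < α) (hr : 0 < r) (β : ℝ) (m : ℕ) :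
    ∃ f ∈ poissonClass α r β 2,
      f 0 - fourierSum m f 0 = √((∑' k, poissonCoeff α r (k + m) ^ 2) / π) := by
  set θ := β * π / 2
  set φ := extremalDensity ((Set.Ici m).indicator (poissonCoeff α r)) θ
  set f : ℝ → ℝ := fun x =>
    0 / 2 + 1 / π * ∫ t in (-π)..π, cosKernel (poissonCoeff α r) θ (x - t) * φ t
  have ha := summable_poissonCoeff hα hr
  have hb := ha.indicator (Set.Ici m)
  have hφ : Continuous φ := continuous_extremalDensity hb θ
  have hper : Function.Periodic φ (2 * π) := periodic_extremalDensity _ θ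
  have hperiod {g : ℝ → ℝ} (hg : Function.Periodic g (2 * π)) :
      ∫ t in (0 : ℝ)..2 * π, g t = ∫ t in (-π)..π, g t := by
    convert hg.intervalIntegral_add_eq 0 (-π) using 2 <;> ring
  refine ⟨f, ⟨fun x => ?_, 0, φ, hper, ?_, ?_, fun x => rfl⟩, ?_⟩
  · simp only [f, add_sub_right_comm x, periodic_cosKernel _ θ _]
  · rw [eLpNorm_two_le_one_iff (memLp_two_restrict_Ioc_of_continuous hφ _ _),
      ← intervalIntegral.integral_of_le two_pi_pos.le]
    exact (hperiod (hper.comp (· ^ 2))).trans_le (integral_sq_extremalDensity_le_one hb θ)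
  · rw [hperiod hper, integral_extremalDensity hb]
  · rw [convolution_sub_fourierSum ha (hφ.intervalIntegrable _ _) θ (fun _ => rfl) m 0,
      convolution_extremalDensity hb, tsum_indicator_Ici_sq]

lemma EnC_eq_sqrt_tsum (hα : 0 < α) (hr0 : 0 < r) (hr1 : r ≤ 1) (β : ℝ) {n : ℕ} (hn : 0 < n) :
    EnC α r β 2 n = √((∑' k : ℕ, exp (-(2 * α) * ((n : ℝ) + k) ^ r)) / π) := by
  obtain ⟨m, rfl⟩ := Nat.exists_eq_add_of_lt hn
  rw [zero_add, ← tsum_poissonCoeff_add_sq, EnC, Nat.add_sub_cancel]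
  set B := √((∑' k, poissonCoeff α r (k + m) ^ 2) / π)
  have hB : 0 ≤ B := sqrt_nonneg _
  have hpoint : ∀ f ∈ poissonClass α r β 2, ∀ x, |f x - fourierSum m f x| ≤ B :=
    fun f hf => abs_sub_fourierSum_le hα hr0 hr1 hf m
  have hfun (f : ℝ → ℝ) :
      ⨆ (_ : f ∈ poissonClass α r β 2), ⨆ x : ℝ, |f x - fourierSum m f x| ≤ B :=
    Real.iSup_le (fun hf => Real.iSup_le (hpoint f hf) hB) hB
  refine le_antisymm (Real.iSup_le hfun hB) ?_
  obtain ⟨f, hf, hext⟩ := exists_mem_poissonClass_sub_fourierSum_eq hα hr0 β m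
  calc B
    _ ≤ |f 0 - fourierSum m f 0| := hext.ge.trans (le_abs_self _)
    _ ≤ ⨆ x : ℝ, |f x - fourierSum m f x| :=
        le_ciSup (f := fun x => |f x - fourierSum m f x|)
          ⟨B, Set.forall_mem_range.2 (hpoint f hf)⟩ 0
    _ = ⨆ (_ : f ∈ poissonClass α r β 2), ⨆ x : ℝ, |f x - fourierSum m f x| := by
        simp only [hf, ciSup_unique]
    _ ≤ ⨆ f ∈ poissonClass α r β 2, ⨆ x : ℝ, |f x - fourierSum m f x| :=
        le_ciSup (f := fun f => ⨆ (_ : f ∈ poissonClass α r β 2), ⨆ x : ℝ,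
          |f x - fourierSum m f x|) ⟨B, Set.forall_mem_range.2 hfun⟩ f

end PoissonClass

/-! ### The asymptotic formula -/

section Asymptotics

variable {α r x : ℝ}

lemma sq_sqrt_mul_rpow_neg (hαr : 0 ≤ α * r) (hx : 0 < x) :
    (√(α * r) * x ^ (-((1 - r) / 2))) ^ 2 = α * r * x ^ (-(1 - r)) := by
  rw [mul_pow, sq_sqrt hαr, ← rpow_mul_natCast hx.le]
  congr 2
  push_cast
  ring

lemma exp_neg_two_mul_eq_leadingTail (hα : α ≠ 0) (hr : r ≠ 0) (hx : 0 < x) :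
    exp (-(2 * α) * x ^ r) = 2 * (α * r * x ^ (-(1 - r))) * leadingTail (2 * α) r x := by
  have hinv : x ^ (-(1 - r)) * x ^ (1 - r) = 1 := by
    rw [← rpow_add hx, neg_add_cancel, rpow_zero]
  rw [leadingTail]
  field_simp
  linear_combination -hinv

/-- The main term of the asymptotics of `EnC α r β 2 n`, at a real argument `x` in place of `n`. -/
noncomputable def mainTerm (α r x : ℝ) : ℝ :=
  exp (-α * x ^ r) / √(2 * π * α * r) * x ^ ((1 - r) / 2)

lemma mainTerm_pos (hα : 0 < α) (hr : 0 < r) (hx : 0 < x) : 0 < mainTerm α r x := by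
  unfold mainTerm
  positivity

lemma sq_mainTerm (hα : 0 < α) (hr : 0 < r) (hx : 0 < x) :
    mainTerm α r x ^ 2 = leadingTail (2 * α) r x / π := by
  have hexp : exp (-α * x ^ r) ^ 2 = exp (-(2 * α) * x ^ r) := by
    rw [← exp_nat_mul]
    push_cast
    ring_nf
  have hpow : (x ^ ((1 - r) / 2)) ^ 2 = x ^ (1 - r) := by
    rw [← rpow_mul_natCast hx.le]
    push_cast
    ring_nf
  rw [mainTerm, mul_pow, div_pow, sq_sqrt (by positivity), hexp, hpow, leadingTail]
  field_simp

lemma tsum_le_mul_leadingTail (hα : 0 < α) (hr : 0 < r) (hx : 0 < x)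
    (hA : 1 / (α * r) * x ^ (-r) ≤ 1) :
    ∑' k : ℕ, exp (-(2 * α) * (x + k) ^ r) ≤
      (1 + 1 / (α * r) * x ^ (-r) + 2 * (α * r * x ^ (-(1 - r)))) *
        leadingTail (2 * α) r x := by
  have hq : x ^ (-r) / (2 * α * r) = 1 / (α * r) * x ^ (-r) / 2 := by field_simp
  have htail := tsum_le_leadingTail (c := 2 * α) (by positivity) hr hx (by linarith)
  rw [hq, exp_neg_two_mul_eq_leadingTail hα.ne' hr.ne' hx] at htail
  have hA0 : 0 < 1 / (α * r) * x ^ (-r) := by positivity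
  have hG : 0 < leadingTail (2 * α) r x := by unfold leadingTail; positivity
  generalize 1 / (α * r) * x ^ (-r) = A at *
  -- `1 ≤ (1 - A / 2) * (1 + A)` for `0 ≤ A ≤ 1`
  have hGA : leadingTail (2 * α) r x ≤ (1 - A / 2) * ((1 + A) * leadingTail (2 * α) r x) := by
    nlinarith [mul_nonneg (mul_nonneg hA0.le (sub_nonneg.2 hA)) hG.le]
  have := le_of_mul_le_mul_left (htail.trans hGA) (by linarith)
  linarith

lemma mainTerm_le_sqrt_tsum (hα : 0 < α) (hr0 : 0 < r) (hr1 : r ≤ 1) (hx : 0 < x) :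
    mainTerm α r x ≤ √((∑' k : ℕ, exp (-(2 * α) * (x + k) ^ r)) / π) := by
  refine le_sqrt_of_sq_le ?_
  rw [sq_mainTerm hα hr0 hx]
  exact div_le_div_of_nonneg_right (leadingTail_le_tsum (by positivity) hr0 hr1 hx) pi_pos.le

lemma sqrt_tsum_le_mainTerm_mul (hα : 0 < α) (hr : 0 < r) (hx : 0 < x)
    (hA : 1 / (α * r) * x ^ (-r) ≤ 1) :
    √((∑' k : ℕ, exp (-(2 * α) * (x + k) ^ r)) / π) ≤
      mainTerm α r x *
        (1 + √2 * (1 / (α * r) * x ^ (-r) + √(α * r) * x ^ (-((1 - r) / 2)))) := by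
  have htsum := tsum_le_mul_leadingTail hα hr hx hA
  rw [← sq_sqrt_mul_rpow_neg (by positivity) hx] at htsum
  have hA0 : 0 ≤ 1 / (α * r) * x ^ (-r) := by positivity
  have hR0 : 0 ≤ √(α * r) * x ^ (-((1 - r) / 2)) := by positivity
  have hG : 0 ≤ leadingTail (2 * α) r x / π := by unfold leadingTail; positivity
  refine sqrt_le_iff.2 ⟨mul_nonneg (mainTerm_pos hα hr hx).le (by positivity), ?_⟩
  rw [mul_pow, sq_mainTerm hα hr hx]
  generalize 1 / (α * r) * x ^ (-r) = A at *
  generalize √(α * r) * x ^ (-((1 - r) / 2)) = R at *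
  have hfactor : 1 + A + 2 * R ^ 2 ≤ (1 + √2 * (A + R)) ^ 2 := by
    have hsq : √2 ^ 2 = 2 := sq_sqrt zero_le_two
    have hone : 1 ≤ √2 := one_le_sqrt.2 one_le_two
    nlinarith [mul_nonneg hA0 hR0, mul_nonneg (sqrt_nonneg 2) hR0,
      mul_le_mul_of_nonneg_right hone hA0]
  calc (∑' k : ℕ, exp (-(2 * α) * (x + k) ^ r)) / π
    _ ≤ (1 + A + 2 * R ^ 2) * leadingTail (2 * α) r x / π :=
        div_le_div_of_nonneg_right htsum pi_pos.le
    _ = leadingTail (2 * α) r x / π * (1 + A + 2 * R ^ 2) := by ring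
    _ ≤ leadingTail (2 * α) r x / π * (1 + √2 * (A + R)) ^ 2 :=
        mul_le_mul_of_nonneg_left hfactor hG

lemma exists_eq_mul_one_add_mul {M E C e : ℝ} (hM : 0 < M) (he : 0 < e) (hlower : M ≤ E)
    (hupper : E ≤ M * (1 + C * e)) : ∃ γ, 0 ≤ γ ∧ γ ≤ C ∧ E = M * (1 + γ * e) := by
  refine ⟨(E / M - 1) / e, div_nonneg ?_ he.le, ?_, by field_simp; ring⟩
  · rwa [sub_nonneg, one_le_div hM]
  · rwa [div_le_iff₀ he, sub_le_iff_le_add', div_le_iff₀' hM]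

end Asymptotics

lemma n₀two_mem {α r : ℝ} (hr0 : 0 < r) (hr1 : r < 1) :
    0 < n₀two α r ∧ 1 / (α * r) * (n₀two α r : ℝ) ^ (-r) +
      2 * α * r * (n₀two α r : ℝ) ^ (-(1 - r)) ≤ (1 / (3 * π) ^ 3) * (1 / 2) := by
  have hpow {s : ℝ} (hs : 0 < s) : Tendsto (fun n : ℕ => (n : ℝ) ^ (-s)) atTop (nhds 0) :=
    (tendsto_rpow_neg_atTop hs).comp tendsto_natCast_atTop_atTop
  have hlim := ((hpow hr0).const_mul (1 / (α * r))).add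
    ((hpow (sub_pos.2 hr1)).const_mul (2 * α * r))
  rw [mul_zero, mul_zero, add_zero] at hlim
  have hbound : 0 < (1 / (3 * π) ^ 3) * (1 / 2) := by positivity
  obtain ⟨n, hn0, hn⟩ :=
    ((eventually_gt_atTop 0).and (hlim.eventually (gt_mem_nhds hbound))).exists
  exact Nat.sInf_mem (s := {n : ℕ | 0 < n ∧ _}) ⟨n, hn0, hn.le⟩

lemma pos_and_rpow_neg_le_one_of_n₀two_le {α r : ℝ} (hr0 : 0 < r) (hr1 : r < 1) (hα : 0 < α)
    {n : ℕ} (hn : n₀two α r ≤ n) : 0 < n ∧ 1 / (α * r) * (n : ℝ) ^ (-r) ≤ 1 := by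
  obtain ⟨hpos, hle⟩ := n₀two_mem (α := α) hr0 hr1
  refine ⟨hpos.trans_le hn, ?_⟩
  have hbound : 1 / (3 * π) ^ 3 ≤ 1 :=
    (div_le_one (by positivity)).2 (one_le_pow₀ (by linarith [pi_gt_three]))
  have hsecond : 0 ≤ 2 * α * r * (n₀two α r : ℝ) ^ (-(1 - r)) := by positivity
  calc 1 / (α * r) * (n : ℝ) ^ (-r)
    _ ≤ 1 / (α * r) * (n₀two α r : ℝ) ^ (-r) :=
        mul_le_mul_of_nonneg_left (rpow_le_rpow_of_nonpos (Nat.cast_pos.2 hpos)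
          (Nat.cast_le.2 hn) (neg_nonpos.2 hr0.le)) (by positivity)
    _ ≤ 1 := by linarith

theorem statement3_general {α r : ℝ} (β : ℝ) (hr0 : 0 < r) (hr1 : r ≤ 1) (hα : 0 < α) {n : ℕ}
    (hn : 0 < n) (hnr : 1 / (α * r) * (n : ℝ) ^ (-r) ≤ 1) :
    ∃ γ : ℝ, 0 ≤ γ ∧ γ ≤ √2 ∧
      EnC α r β 2 n =
        exp (-α * (n : ℝ) ^ r) / √(2 * π * α * r) * (n : ℝ) ^ ((1 - r) / 2) *
          (1 + γ * (1 / (α * r) * (n : ℝ) ^ (-r) +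
            √(α * r) * (n : ℝ) ^ (-((1 - r) / 2)))) := by
  have hn0 : (0 : ℝ) < n := Nat.cast_pos.2 hn
  rw [EnC_eq_sqrt_tsum hα hr0 hr1 β hn]
  exact exists_eq_mul_one_add_mul (mainTerm_pos hα hr0 hn0) (by positivity)
    (mainTerm_le_sqrt_tsum hα hr0 hr1 hn0) (sqrt_tsum_le_mainTerm_mul hα hr0 hn0 hnr)

theorem statement3 (α r β : ℝ)
    (hr0 : 0 < r) (hr1 : r < 1) (hα : 0 < α) :
    ∀ n : ℕ, n₀two α r ≤ n →
      ∃ γ : ℝ, |γ| ≤ 392 * π ^ ((5 : ℝ) / 2) ∧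
        EnC α r β 2 n =
          Real.exp (-α * (n : ℝ) ^ r) / Real.sqrt (2 * π * α * r) * (n : ℝ) ^ ((1 - r) / 2) *
            (1 + γ * (1 / (α * r) * (n : ℝ) ^ (-r) +
              Real.sqrt (α * r) * (n : ℝ) ^ (-((1 - r) / 2)))) := by
  intro n hn
  obtain ⟨hn0, hnr⟩ := pos_and_rpow_neg_le_one_of_n₀two_le hr0 hr1 hα hn
  obtain ⟨γ, hγ0, hγ, hE⟩ := statement3_general β hr0 hr1.le hα hn0 hnr
  refine ⟨γ, ?_, hE⟩
  have hpi : 1 ≤ π ^ ((5 : ℝ) / 2) := one_le_rpow (by linarith [pi_gt_three]) (by norm_num)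
  have hsqrt : √2 ≤ 2 := sqrt_le_iff.2 (by norm_num)
  rw [abs_of_nonneg hγ0]
  linarith
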